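/- Every 2-connected graph G on n vertices with minimum degree δ ≥ 2 contains a cycle of length at least min{n, 2δ} (Dirac's theorem on long cycles). -/

import Mathlib

namespace DiracAux

variable {V : Type*} [Fintype V] [DecidableEq V] {G : SimpleGraph V}

/-- There is a path from `u` to `v` with vertex set exactly `S`. -/
def HP (G : SimpleGraph V) (S : Finset V) (u v : V) : Prop :=
  ∃ p : G.Walk u v, p.IsPath ∧ ∀ x, x ∈ p.support ↔ x ∈ S

lemma HP.congr {S T : Finset V} {u v : V} (h : HP G S u v) (e : ∀ x, x ∈ S ↔ x ∈ T) :
    HP G T u v := by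
  obtain ⟨p, hp, h⟩ := h
  exact ⟨p, hp, fun x => (h x).trans (e x)⟩

lemma HP.single (u : V) : HP G {u} u u := ⟨.nil, by simp, by simp⟩

lemma HP.symm {S : Finset V} {u v : V} (h : HP G S u v) : HP G S v u := by
  obtain ⟨p, hp, h⟩ := h
  exact ⟨p.reverse, hp.reverse, by simpa using h⟩

lemma HP.left {S : Finset V} {u v : V} (h : HP G S u v) : u ∈ S := by
  obtain ⟨p, hp, h⟩ := h
  exact (h u).1 p.start_mem_support

lemma HP.right {S : Finset V} {u v : V} (h : HP G S u v) : v ∈ S := h.symm.left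

lemma HP.cons {S : Finset V} {u v w : V} (h : HP G S w v) (ha : G.Adj u w) (hu : u ∉ S) :
    HP G (insert u S) u v := by
  obtain ⟨p, hp, h⟩ := h
  exact ⟨.cons ha p, by simp [SimpleGraph.Walk.cons_isPath_iff, hp, h, hu], by simp [h]⟩

lemma HP.snoc {S : Finset V} {u v w : V} (h : HP G S u w) (ha : G.Adj w v) (hu : v ∉ S) :
    HP G (insert v S) u v := (h.symm.cons ha.symm hu).symm

/-- first step decomposition -/
lemma HP.uncons {S : Finset V} {u v : V} (h : HP G S u v) :
    (u = v ∧ S = {u}) ∨ ∃ w, G.Adj u w ∧ HP G (S.erase u) w v := by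
  obtain ⟨p, hp, h⟩ := h
  cases p with
  | nil => left; simp at h; refine ⟨rfl, ?_⟩; ext x; simp [h]
  | cons ha q =>
    right
    rw [SimpleGraph.Walk.cons_isPath_iff] at hp
    refine ⟨_, ha, q, hp.1, fun x => ?_⟩
    have := h x
    simp at this
    rw [Finset.mem_erase, ← this]
    constructor
    · intro hx
      refine ⟨?_, Or.inr hx⟩
      rintro rfl; exact hp.2 hx
    · tauto

lemma HP.trans {S T : Finset V} {u v w : V} (h : HP G S u v) (h' : HP G T v w)
    (hd : ∀ x ∈ S, x ∈ T → x = v) : HP G (S ∪ T) u w := by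
  obtain ⟨p, hp, h⟩ := h
  obtain ⟨q, hq, h'⟩ := h'
  induction p generalizing S with
  | nil =>
    refine ⟨q, hq, fun x => ?_⟩
    simp at h
    have := h' x
    have hv := (h' _).1 q.start_mem_support
    simp [← h, this]
    rintro rfl; exact hv
  | @cons a b c ha r ih =>
    rw [SimpleGraph.Walk.cons_isPath_iff] at hp
    have h1 := @ih r.support.toFinset (by
      intro x hx; apply hd; rw [← h]; simp at hx ⊢; right; exact hx) hp.1 (by simp) q hq h'
    have hac : a ≠ c := by rintro rfl; exact hp.2 r.end_mem_support
    have h2 := HP.cons h1 ha (by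
      simp [hp.2]; intro hT; exact hac (hd a ((h a).1 (by simp)) hT))
    refine h2.congr fun x => ?_
    simp [← h]; tauto

lemma HP.join {S T : Finset V} {u v w x : V} (h : HP G S u v) (h' : HP G T w x)
    (ha : G.Adj v w) (hd : Disjoint S T) : HP G (S ∪ T) u x := by
  have hv : v ∉ T := fun hv => (Finset.disjoint_left.1 hd) h.right hv
  refine (h.trans (h'.cons ha hv) ?_).congr fun y => ?_
  · intro y hy hy'
    rcases Finset.mem_insert.1 hy' with h1 | h1
    · exact h1
    · exact absurd h1 (Finset.disjoint_left.1 hd hy)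
  · have := h.right
    simp; grind

/-- split at a vertex -/
lemma HP.split {S : Finset V} {u v z : V} (h : HP G S u v) (hz : z ∈ S) :
    ∃ A B : Finset V, HP G A u z ∧ HP G B z v ∧ A ∪ B = S ∧ ∀ x ∈ A, x ∈ B → x = z := by
  obtain ⟨p, hp, h⟩ := h
  obtain ⟨q, r, hq, hr, e⟩ := (hp.mem_support_iff_exists_append).1 ((h z).2 hz)
  refine ⟨q.support.toFinset, r.support.toFinset, ⟨q, hq, by simp⟩, ⟨r, hr, by simp⟩, ?_, ?_⟩
  · ext x; rw [← h, e]; simp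
  · intro x hx hx'
    by_contra hne
    rw [e] at hp
    exact hp.ne_of_mem_support_of_append hne (by simpa using hx) (by simpa using hx') rfl

lemma HP.card {S : Finset V} {u v : V} {p : G.Walk u v} (hp : p.IsPath)
    (h : ∀ x, x ∈ p.support ↔ x ∈ S) : S.card = p.length + 1 := by
  rw [← p.length_support, ← List.toFinset_card_of_nodup hp.support_nodup]
  congr 1; ext x; simp [h]

/-- `S` is the vertex set of a cycle. -/
def Cyc (G : SimpleGraph V) (S : Finset V) : Prop := ∃ u v, HP G S u v ∧ G.Adj v u ∧ 3 ≤ S.card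

lemma Cyc.cycle {S : Finset V} (h : Cyc G S) :
    ∃ (v : V) (c : G.Walk v v), c.IsCycle ∧ S.card ≤ c.length := by
  obtain ⟨u, v, ⟨p, hp, h⟩, ha, hc⟩ := h
  have e := HP.card hp h
  refine ⟨v, .cons ha p, ?_, by simp [e]⟩
  rw [SimpleGraph.Walk.cons_isCycle_iff]
  refine ⟨hp, fun hm => ?_⟩
  rw [Sym2.eq_swap] at hm
  have := hp.length_eq_one_of_mem_edges hm
  omega

/-- A cycle can be opened to a path ending at any of its vertices. -/
lemma Cyc.rot {S : Finset V} (h : Cyc G S) {z : V} (hz : z ∈ S) : ∃ w, HP G S w z := by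
  obtain ⟨u, v, h, ha, hc⟩ := h
  obtain ⟨A, B, hA, hB, e, hd⟩ := h.split hz
  rcases hB.uncons with ⟨rfl, rfl⟩ | ⟨w, hw, hB'⟩
  · refine ⟨u, hA.congr ?_⟩
    have := hA.right
    intro x; rw [← e]; simp; grind
  · refine ⟨w, (hB'.join hA ha ?_).congr ?_⟩
    · rw [Finset.disjoint_left]; intro x hx hx'
      simp at hx; exact hx.1 (hd x hx' hx.2)
    · have := hA.right
      intro x; rw [← e]; simp; grind

lemma cyc_of_two {S T : Finset V} {u v : V} (h : HP G S u v) (h' : HP G T u v)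
    (hd : ∀ x ∈ S, x ∈ T → x = u ∨ x = v) (hne : u ≠ v) (hc : 3 ≤ (S ∪ T).card) :
    Cyc G (S ∪ T) := by
  rcases h'.uncons with ⟨e, -⟩ | ⟨w, hw, hB⟩
  · exact absurd e hne
  · have := h.left
    have h1 := (h.trans hB.symm (by
      intro x hx hx'; simp at hx'
      rcases hd x hx hx'.2 with h1 | h1
      · exact absurd h1 hx'.1
      · exact h1)).congr (T := S ∪ T) (by intro x; simp; grind)
    exact ⟨u, w, h1, hw.symm, hc⟩

lemma exists_path (h2conn : ∀ v : V, ((⊤ : G.Subgraph).deleteVerts {v}).coe.Connected)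
    {z c d : V} (hc : c ≠ z) (hd : d ≠ z) : ∃ T, HP G T c d ∧ z ∉ T := by
  obtain ⟨p, hp⟩ := ((h2conn z).preconnected ⟨c, by simpa using hc⟩
    ⟨d, by simpa using hd⟩).exists_isPath
  refine ⟨(p.map (SimpleGraph.Subgraph.hom _)).support.toFinset,
    ⟨p.map (SimpleGraph.Subgraph.hom _), ?_, by simp⟩, ?_⟩
  · exact SimpleGraph.Walk.IsPath.map SimpleGraph.Subgraph.hom_injective hp
  · rw [List.mem_toFinset, SimpleGraph.Walk.support_map, List.mem_map]
    rintro ⟨⟨y, hy⟩, -, e⟩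
    simp at hy e
    exact hy e

lemma ear (h2conn : ∀ v : V, ((⊤ : G.Subgraph).deleteVerts {v}).coe.Connected)
    {z c d : V} {C D : Finset V} (hc : c ∈ C) (hd : d ∈ D) (hcz : z ∉ C) (hdz : z ∉ D) :
    ∃ T c d, HP G T c d ∧ c ∈ C ∧ d ∈ D ∧ z ∉ T ∧ (∀ x ∈ T, x ∈ C → x = c) ∧
      (∀ x ∈ T, x ∈ D → x = d) := by
  classical
  have hex : ∃ n, ∃ T c d, HP G T c d ∧ c ∈ C ∧ d ∈ D ∧ z ∉ T ∧ T.card = n := by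
    obtain ⟨T, hT, hz⟩ := exists_path h2conn (z := z) (c := c) (d := d)
      (by rintro rfl; exact hcz hc) (by rintro rfl; exact hdz hd)
    exact ⟨_, T, c, d, hT, hc, hd, hz, rfl⟩
  obtain ⟨T, c, d, hT, hc, hd, hz, hn⟩ := Nat.find_spec hex
  have hmin := fun m => @Nat.find_min _ _ hex m
  rw [← hn] at hmin
  refine ⟨T, c, d, hT, hc, hd, hz, ?_, ?_⟩
  · intro x hx hxC
    by_contra hne
    obtain ⟨A, B, hA, hB, e, hAB⟩ := hT.split hx
    have hBT : B ⊆ T := by rw [← e]; exact Finset.subset_union_right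
    refine hmin B.card (Finset.card_lt_card ⟨hBT, fun hTB => ?_⟩)
      ⟨B, x, d, hB, hxC, hd, fun h => hz (hBT h), rfl⟩
    exact hne (hAB c hA.left (hTB hT.left)).symm
  · intro x hx hxC
    by_contra hne
    obtain ⟨A, B, hA, hB, e, hAB⟩ := hT.split hx
    have hBT : A ⊆ T := by rw [← e]; exact Finset.subset_union_left
    refine hmin A.card (Finset.card_lt_card ⟨hBT, fun hTB => ?_⟩)
      ⟨A, c, x, hA, hc, hxC, fun h => hz (hBT h), rfl⟩
    exact hne (hAB d (hTB hT.right) hB.right).symm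


/-- `f` lists a path on indices `0..k`. -/
structure PF (G : SimpleGraph V) (f : ℕ → V) (k : ℕ) : Prop where
  inj : ∀ i ≤ k, ∀ j ≤ k, f i = f j → i = j
  adj : ∀ i < k, G.Adj (f i) (f (i + 1))

/-- The vertices with indices in `[i, j]`. -/
def seg (f : ℕ → V) (i j : ℕ) : Finset V := (Finset.Icc i j).image f

lemma mem_seg {f : ℕ → V} {i j : ℕ} {x : V} : x ∈ seg f i j ↔ ∃ a, i ≤ a ∧ a ≤ j ∧ f a = x := by
  simp [seg, and_assoc]

lemma PF.mem {f : ℕ → V} {k : ℕ} (h : PF G f k) {i j a : ℕ} (hj : j ≤ k) (ha : a ≤ k) :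
    f a ∈ seg f i j ↔ i ≤ a ∧ a ≤ j := by
  rw [mem_seg]
  constructor
  · rintro ⟨b, h1, h2, e⟩
    have := h.inj b (by omega) a ha e
    omega
  · rintro ⟨h1, h2⟩; exact ⟨a, h1, h2, rfl⟩

lemma PF.seg_card {f : ℕ → V} {k : ℕ} (h : PF G f k) {i j : ℕ} (hj : j ≤ k) :
    (seg f i j).card = j + 1 - i := by
  rw [seg, Finset.card_image_of_injOn, Nat.card_Icc]
  intro a ha b hb e
  simp at ha hb
  exact h.inj a (by omega) b (by omega) e

lemma PF.hp {f : ℕ → V} {k : ℕ} (h : PF G f k) {i j : ℕ} (hij : i ≤ j) (hj : j ≤ k) :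
    HP G (seg f i j) (f i) (f j) := by
  induction j, hij using Nat.le_induction with
  | base => simpa [seg] using HP.single (G := G) (f i)
  | succ j hij ih =>
    refine ((ih (by omega)).snoc (h.adj j (by omega)) ?_).congr fun x => ?_
    · rw [h.mem (by omega) (by omega)]; omega
    · rw [Finset.mem_insert, mem_seg, mem_seg]
      constructor
      · rintro (rfl | ⟨a, h1, h2, h3⟩)
        · exact ⟨j + 1, by omega, le_rfl, rfl⟩
        · exact ⟨a, h1, by omega, h3⟩
      · rintro ⟨a, h1, h2, h3⟩
        by_cases e : a = j + 1
        · left; rw [← h3, e]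
        · right; exact ⟨a, h1, by omega, h3⟩

lemma PF.rev {f : ℕ → V} {k : ℕ} (h : PF G f k) : PF G (fun i => f (k - i)) k where
  inj i hi j hj e := by have := h.inj _ (by omega) _ (by omega) e; omega
  adj i hi := by
    have := (h.adj (k - (i + 1)) (by omega)).symm
    rwa [show k - (i + 1) + 1 = k - i by omega] at this

lemma seg_disj {f : ℕ → V} {k : ℕ} (h : PF G f k) {a b c d : ℕ} (hbc : b < c) (hd : d ≤ k) :
    Disjoint (seg f a b) (seg f c d) := by
  rw [Finset.disjoint_left]
  intro x hx hx'
  rw [mem_seg] at hx hx'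
  obtain ⟨i, _, _, rfl⟩ := hx
  obtain ⟨j, _, _, e⟩ := hx'
  have := h.inj j (by omega) i (by omega) e
  omega

/-- closing up at the left end -/
lemma left_end {f : ℕ → V} {k : ℕ} (h : PF G f k) {s a : ℕ} (hs : s ≤ k) (has : a < s)
    (hadj : G.Adj (f 0) (f s)) :
    ∃ S, HP G S (f a) (f s) ∧ S ⊆ seg f 0 s ∧ f 0 ∈ S ∧
      ∀ i ≤ s, G.Adj (f 0) (f i) → f i ∈ S := by
  classical
  have hex : ∃ j, a < j ∧ G.Adj (f 0) (f j) := ⟨s, has, hadj⟩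
  obtain ⟨hj1, hj2⟩ := Nat.find_spec hex
  have hmin := fun m => @Nat.find_min _ _ hex m
  have hjs : Nat.find hex ≤ s := Nat.find_min' hex ⟨has, hadj⟩
  generalize Nat.find hex = j at *
  refine ⟨seg f 0 a ∪ seg f j s, (h.hp (Nat.zero_le a) (by omega)).symm.join (h.hp hjs hs) hj2
    (seg_disj h hj1 hs), ?_, ?_, ?_⟩
  · intro x hx
    simp only [Finset.mem_union, mem_seg] at hx ⊢
    rcases hx with ⟨i, _, _, e⟩ | ⟨i, _, _, e⟩ <;> exact ⟨i, by omega, by omega, e⟩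
  · simp only [Finset.mem_union, mem_seg]; exact Or.inl ⟨0, le_rfl, by omega, rfl⟩
  · intro i hi hai
    simp only [Finset.mem_union, mem_seg]
    by_cases h1 : i ≤ a
    · exact Or.inl ⟨i, by omega, by omega, rfl⟩
    · refine Or.inr ⟨i, ?_, by omega, rfl⟩
      by_contra h2
      exact hmin i (by omega) ⟨by omega, hai⟩

lemma right_end {f : ℕ → V} {k : ℕ} (h : PF G f k) {t b : ℕ} (hb : b ≤ k) (htb : t < b)
    (hadj : G.Adj (f k) (f t)) :
    ∃ S, HP G S (f t) (f b) ∧ S ⊆ seg f t k ∧ f k ∈ S ∧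
      ∀ i, t ≤ i → i ≤ k → G.Adj (f k) (f i) → f i ∈ S := by
  obtain ⟨S, h1, h2, h3, h4⟩ := left_end h.rev (s := k - t) (a := k - b) (by omega) (by omega)
    (by simpa [show k - (k - t) = t by omega] using hadj)
  simp only [show k - (k - t) = t by omega, show k - (k - b) = b by omega, Nat.sub_zero] at h1 h3
  refine ⟨S, h1.symm, ?_, h3, ?_⟩
  · intro x hx
    have := h2 hx
    rw [mem_seg] at this ⊢
    obtain ⟨i, _, _, e⟩ := this
    exact ⟨k - i, by omega, by omega, e⟩
  · intro i hi hik ha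
    have := h4 (k - i) (by omega)
    simp only [show k - (k - i) = i by omega, Nat.sub_zero] at this
    exact this ha

/-- Two disjoint linking paths, from `f p`, `f q` (one of which is `f s`) to `f m`, `f b`. -/
def Config (G : SimpleGraph V) (f : ℕ → V) (k s m : ℕ) : Prop :=
  ∃ (p q b : ℕ) (X Y : Finset V), (p = s ∧ q < s ∨ q = s ∧ p < s) ∧ m < b ∧ b ≤ k ∧
    HP G X (f p) (f m) ∧ HP G Y (f q) (f b) ∧ Disjoint X Y ∧
    (∀ x ∈ X, x ∈ seg f 0 s → x = f p) ∧ (∀ x ∈ Y, x ∈ seg f 0 s → x = f q) ∧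
    (∀ x ∈ X, x ∈ seg f m k → x = f m) ∧ (∀ x ∈ Y, x ∈ seg f m k → x = f b)

lemma config_base (h2conn : ∀ v : V, ((⊤ : G.Subgraph).deleteVerts {v}).coe.Connected)
    {f : ℕ → V} {k s : ℕ} (h : PF G f k) (hs : 0 < s) (hsk : s < k) : Config G f k s s := by
  obtain ⟨T, c, d, hT, hc, hd, hz, hTC, hTD⟩ := ear h2conn (z := f s) (c := f 0) (d := f k)
    (C := seg f 0 (s - 1)) (D := seg f (s + 1) k)
    (by rw [h.mem] <;> omega) (by rw [h.mem] <;> omega) (by rw [h.mem] <;> omega)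
    (by rw [h.mem] <;> omega)
  obtain ⟨a, -, ha, rfl⟩ := mem_seg.1 hc
  obtain ⟨b, hb, hbk, rfl⟩ := mem_seg.1 hd
  refine ⟨s, a, b, {f s}, T, Or.inl ⟨rfl, by omega⟩, by omega, hbk, HP.single _, hT, by simpa using hz,
    by simp, ?_, by simp, ?_⟩
  · intro x hx hx'
    apply hTC x hx
    rw [mem_seg] at hx' ⊢
    obtain ⟨i, _, _, rfl⟩ := hx'
    refine ⟨i, by omega, ?_, rfl⟩
    by_contra hh
    exact hz ((show i = s by omega) ▸ hx)
  · intro x hx hx'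
    apply hTD x hx
    rw [mem_seg] at hx' ⊢
    obtain ⟨i, _, _, rfl⟩ := hx'
    refine ⟨i, ?_, by omega, rfl⟩
    by_contra hh
    exact hz ((show i = s by omega) ▸ hx)

lemma seg_mono {f : ℕ → V} {a b c d : ℕ} (h1 : c ≤ a) (h2 : b ≤ d) {x : V} (hx : x ∈ seg f a b) :
    x ∈ seg f c d := by
  rw [mem_seg] at *
  obtain ⟨i, _, _, e⟩ := hx
  exact ⟨i, by omega, by omega, e⟩

lemma config_step (h2conn : ∀ v : V, ((⊤ : G.Subgraph).deleteVerts {v}).coe.Connected)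
    {f : ℕ → V} {k s m : ℕ} (h : PF G f k) (hsm : s ≤ m) (hmk : m + 1 < k)
    (hc : Config G f k s m) : Config G f k s (m + 1) := by
  obtain ⟨p, q, b, X, Y, hpq, hmb, hbk, hX, hY, hXY, hXA, hYA, hXB, hYB⟩ := hc
  rw [Finset.disjoint_left] at hXY
  have hzX : f (m + 1) ∉ X := fun hx => by
    have := h.inj _ (by omega) _ (by omega) (hXB _ hx (by rw [h.mem] <;> omega))
    omega
  have hzA : f (m + 1) ∉ seg f 0 s := by rw [h.mem] <;> omega
  have hX' := hX.snoc (h.adj m (by omega)) hzX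
  have hXA' : ∀ x ∈ insert (f (m + 1)) X, x ∈ seg f 0 s → x = f p := by
    intro x hx hxA
    rcases Finset.mem_insert.1 hx with rfl | hx
    · exact absurd hxA hzA
    · exact hXA x hx hxA
  have hsub : ∀ x, x ∈ seg f (m + 1) k → x ∈ seg f m k := fun x hx => seg_mono (by omega) le_rfl hx
  have hmB : f m ∉ seg f (m + 1) k := by rw [h.mem] <;> omega
  have hXB0 : ∀ x ∈ X, x ∉ seg f (m + 1) k := fun x hx hxB =>
    hmB (hXB x hx (hsub x hxB) ▸ hxB)
  have hXB' : ∀ x ∈ insert (f (m + 1)) X, x ∈ seg f (m + 1) k → x = f (m + 1) := by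
    intro x hx hxB
    rcases Finset.mem_insert.1 hx with rfl | hx
    · rfl
    · exact absurd hxB (hXB0 x hx)
  have hYB' : ∀ x ∈ Y, x ∈ seg f (m + 1) k → x = f b := fun x hx hxB => hYB x hx (hsub x hxB)
  by_cases hb : m + 1 < b
  · refine ⟨p, q, b, insert (f (m + 1)) X, Y, hpq, hb, hbk, hX', hY, ?_, hXA', hYA, hXB', hYB'⟩
    rw [Finset.disjoint_left]
    intro x hx hxY
    rcases Finset.mem_insert.1 hx with rfl | hx
    · have := h.inj _ (by omega) _ (by omega) (hYB _ hxY (by rw [h.mem] <;> omega))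
      omega
    · exact hXY hx hxY
  · obtain rfl : b = m + 1 := by omega
    have hsplit : ∀ x, x ∈ seg f (m + 1) k ↔ x = f (m + 1) ∨ x ∈ seg f (m + 2) k := by
      intro x
      simp only [mem_seg]
      constructor
      · rintro ⟨i, h1, h2, rfl⟩
        by_cases e : i = m + 1
        · left; rw [e]
        · right; exact ⟨i, by omega, by omega, rfl⟩
      · rintro (rfl | ⟨i, h1, h2, rfl⟩)
        · exact ⟨_, le_rfl, by omega, rfl⟩
        · exact ⟨i, by omega, by omega, rfl⟩
    obtain ⟨T, c, d, hT, hc, hd, hz, hTC, hTD⟩ := ear h2conn (z := f (m + 1)) (c := f m) (d := f k)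
      (C := (seg f 0 s ∪ X ∪ Y).erase (f (m + 1))) (D := seg f (m + 2) k)
      (by
        have hne : f m ≠ f (m + 1) := (h.adj m (by omega)).ne
        simp [hX.right, hne])
      (by rw [h.mem] <;> omega) (by simp)
      (by rw [h.mem] <;> omega)
    obtain ⟨b, hb1, hb2, rfl⟩ := mem_seg.1 hd
    have hTC' : ∀ x ∈ T, x ∈ seg f 0 s ∨ x ∈ X ∨ x ∈ Y → x = c := by
      intro x hx hx'
      apply hTC x hx
      have : x ≠ f (m + 1) := by rintro rfl; exact hz hx
      simp [this]; tauto
    have hTB : ∀ x ∈ T, x ∈ seg f (m + 1) k → x = f b := by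
      intro x hx hxB
      rcases (hsplit x).1 hxB with rfl | h1
      · exact absurd hx hz
      · exact hTD x hx h1
    have hcz : c ≠ f (m + 1) := (Finset.mem_erase.1 hc).1
    have hbs : f b ∉ seg f 0 s := by rw [h.mem] <;> omega
    have hc' : c ∈ X ∨ c ∈ Y ∨ (c ∉ X ∧ c ∉ Y ∧ c ∈ seg f 0 s) := by
      have := (Finset.mem_erase.1 hc).2
      simp only [Finset.mem_union] at this
      tauto
    rcases hc' with hcX | hcY | ⟨hcX, hcY, hcA⟩
    · obtain ⟨A, B, hA, hB, e, hAB⟩ := hX.split hcX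
      have hAX : ∀ x ∈ A, x ∈ X := fun x hx => by rw [← e]; simp [hx]
      have hcY : c ∉ Y := hXY hcX
      refine ⟨q, p, b, Y, A ∪ T, hpq.symm, hb1, hb2, hY,
        hA.trans hT (fun x hx hx' => hTC' x hx' (Or.inr (Or.inl (hAX x hx)))), ?_, hYA, ?_, hYB', ?_⟩
      · rw [Finset.disjoint_left]
        intro x hx hx'
        rcases Finset.mem_union.1 hx' with h1 | h1
        · exact hXY (hAX x h1) hx
        · exact hcY (hTC' x h1 (Or.inr (Or.inr hx)) ▸ hx)
      · intro x hx hx'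
        rcases Finset.mem_union.1 hx with h1 | h1
        · exact hXA x (hAX x h1) hx'
        · have := hTC' x h1 (Or.inl hx')
          subst this
          exact hXA x hcX hx'
      · intro x hx hx'
        rcases Finset.mem_union.1 hx with h1 | h1
        · exact absurd hx' (hXB0 x (hAX x h1))
        · exact hTB x h1 hx'
    · obtain ⟨A, B, hA, hB, e, hAB⟩ := hY.split hcY
      have hAY : ∀ x ∈ A, x ∈ Y := fun x hx => by rw [← e]; simp [hx]
      have hcX : c ∉ X := fun h => hXY h hcY
      have hzA' : f (m + 1) ∉ A := fun hx => hcz (hAB _ hx hB.right).symm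
      refine ⟨p, q, b, insert (f (m + 1)) X, A ∪ T, hpq, hb1, hb2, hX',
        hA.trans hT (fun x hx hx' => hTC' x hx' (Or.inr (Or.inr (hAY x hx)))), ?_, hXA', ?_, hXB', ?_⟩
      · rw [Finset.disjoint_left]
        intro x hx hx'
        rcases Finset.mem_insert.1 hx with rfl | hx
        · rcases Finset.mem_union.1 hx' with h1 | h1
          · exact hzA' h1
          · exact hz h1
        · rcases Finset.mem_union.1 hx' with h1 | h1
          · exact hXY hx (hAY x h1)
          · exact hcX (hTC' x h1 (Or.inr (Or.inl hx)) ▸ hx)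
      · intro x hx hx'
        rcases Finset.mem_union.1 hx with h1 | h1
        · exact hYA x (hAY x h1) hx'
        · have := hTC' x h1 (Or.inl hx')
          subst this
          exact hYA x hcY hx'
      · intro x hx hx'
        rcases Finset.mem_union.1 hx with h1 | h1
        · have := hYB' x (hAY x h1) hx'
          subst this
          exact absurd h1 hzA'
        · exact hTB x h1 hx'
    · obtain ⟨a, -, ha, rfl⟩ := mem_seg.1 hcA
      have hTA : ∀ x ∈ T, x ∈ seg f 0 s → x = f a := fun x hx hx' => hTC' x hx (Or.inl hx')
      rcases hpq with ⟨rfl, hq⟩ | ⟨rfl, hp⟩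
      · have has : a ≠ p := by rintro rfl; exact hcX hX.left
        refine ⟨p, a, b, insert (f (m + 1)) X, T, Or.inl ⟨rfl, by omega⟩, hb1, hb2, hX', hT, ?_,
          hXA', hTA, hXB', hTB⟩
        rw [Finset.disjoint_left]
        intro x hx hx'
        rcases Finset.mem_insert.1 hx with rfl | hx
        · exact hz hx'
        · exact hcX (hTC' x hx' (Or.inr (Or.inl hx)) ▸ hx)
      · have has : a ≠ q := by rintro rfl; exact hcY hY.left
        refine ⟨q, a, b, Y, T, Or.inl ⟨rfl, by omega⟩, hb1, hb2, hY, hT, ?_,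
          hYA, hTA, hYB', hTB⟩
        rw [Finset.disjoint_left]
        intro x hx hx'
        exact hcY (hTC' x hx' (Or.inr (Or.inr hx)) ▸ hx)

lemma config_all (h2conn : ∀ v : V, ((⊤ : G.Subgraph).deleteVerts {v}).coe.Connected)
    {f : ℕ → V} {k s t : ℕ} (h : PF G f k) (hs : 0 < s) (hst : s ≤ t) (htk : t < k) :
    Config G f k s t := by
  induction t, hst using Nat.le_induction with
  | base => exact config_base h2conn h hs htk
  | succ m hm ih => exact config_step h2conn h hm htk (ih (by omega))

/-- The non-crossing case. -/
lemma noncross (h2conn : ∀ v : V, ((⊤ : G.Subgraph).deleteVerts {v}).coe.Connected)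
    {f : ℕ → V} {k s t : ℕ} (h : PF G f k) (hs : 0 < s) (hst : s ≤ t) (htk : t < k)
    (h0 : G.Adj (f 0) (f s)) (hk : G.Adj (f k) (f t)) :
    ∃ S, Cyc G S ∧ f 0 ∈ S ∧ f k ∈ S ∧ (∀ i ≤ s, G.Adj (f 0) (f i) → f i ∈ S) ∧
      ∀ i, t ≤ i → i ≤ k → G.Adj (f k) (f i) → f i ∈ S := by
  obtain ⟨p, q, b, X, Y, hpq, hmb, hbk, hX, hY, hXY, hXA, hYA, hXB, hYB⟩ :=
    config_all h2conn h hs hst htk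
  rw [Finset.disjoint_left] at hXY
  obtain ⟨R, hR, hRB, hRk, hRn⟩ := right_end h hbk hmb hk
  have hLex : ∃ S, HP G S (f q) (f p) ∧ S ⊆ seg f 0 s ∧ f 0 ∈ S ∧
      ∀ i ≤ s, G.Adj (f 0) (f i) → f i ∈ S := by
    rcases hpq with ⟨rfl, hq⟩ | ⟨rfl, hp⟩
    · exact left_end h (by omega) hq h0
    · obtain ⟨S, h1, h2⟩ := left_end h (by omega) hp h0
      exact ⟨S, h1.symm, h2⟩
  obtain ⟨L, hL, hLA, hL0, hLn⟩ := hLex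
  -- the intersection of both end segments
  have hAB : ∀ x ∈ seg f 0 s, x ∈ seg f t k → x = f t := by
    intro x hx hx'
    obtain ⟨i, _, _, rfl⟩ := mem_seg.1 hx
    rw [h.mem (by omega) (by omega)] at hx'
    congr 1; omega
  have hq : q ≤ s := by omega
  have hqt : ∀ x ∈ Y, x ≠ f t := by
    rintro x hx rfl
    exact hXY hX.right hx
  have h1 := hL.trans hX (fun x hx hx' => hXA x hx' (hLA hx))
  have h2 := h1.trans hR (by
    intro x hx hx'
    rcases Finset.mem_union.1 hx with hx | hx
    · exact hAB x (hLA hx) (hRB hx')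
    · exact hXB x hx (hRB hx'))
  have hne : f q ≠ f b := fun e => by
    have := h.inj _ (by omega) _ (by omega) e
    omega
  have hd : ∀ x ∈ L ∪ X ∪ R, x ∈ Y → x = f q ∨ x = f b := by
    intro x hx hxY
    simp only [Finset.mem_union] at hx
    rcases hx with (hx | hx) | hx
    · exact Or.inl (hYA x hxY (hLA hx))
    · exact absurd hxY (hXY hx)
    · exact Or.inr (hYB x hxY (hRB hx))
  have hcard : 3 ≤ (L ∪ X ∪ R ∪ Y).card := by
    have : ({f 0, f s, f k} : Finset V).card = 3 := by
      have e1 : f 0 ≠ f s := h0.ne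
      have e2 : f 0 ≠ f k := fun e => by
        have := h.inj _ (by omega) _ (by omega) e
        omega
      have e3 : f s ≠ f k := fun e => by
        have := h.inj _ (by omega) _ (by omega) e
        omega
      rw [Finset.card_eq_three]
      exact ⟨_, _, _, e1, e2, e3, rfl⟩
    rw [← this]
    apply Finset.card_le_card
    intro x hx
    simp only [Finset.mem_insert, Finset.mem_singleton] at hx
    simp only [Finset.mem_union]
    rcases hx with rfl | rfl | rfl
    · tauto
    · have := hLn s le_rfl h0; tauto
    · tauto
  refine ⟨_, cyc_of_two h2 hY hd hne hcard, by simp [hL0], by simp [hRk], ?_, ?_⟩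
  · intro i hi ha; simp [hLn i hi ha]
  · intro i hi hik ha; simp [hRn i hi hik ha]

/-- Counting in the crossing case with gap at least two. -/
lemma count_cross {k i j δ : ℕ} {N0 Nk : Finset ℕ} (h0 : ∀ x ∈ N0, 0 < x ∧ x ≤ k)
    (hk : ∀ x ∈ Nk, x < k) (hi : i ∈ Nk) (hj : j ∈ N0) (hij : i < j)
    (hmin : ∀ i' ∈ Nk, ∀ j' ∈ N0, i' < j' → j - i ≤ j' - i') (hgap : 2 ≤ j - i)
    (c0 : δ ≤ N0.card) (ck : δ ≤ Nk.card) : 2 * δ ≤ (i + 1) + (k + 1 - j) := by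
  have hjk := (h0 j hj).2
  have himg : ((N0.erase j).image (fun x => x - 1)).card = N0.card - 1 := by
    rw [Finset.card_image_of_injOn, Finset.card_erase_of_mem hj]
    intro a ha b hb e
    simp at ha hb e
    have := h0 a ha.1
    have := h0 b hb.1
    omega
  have hdisj : Disjoint ((N0.erase j).image (fun x => x - 1)) Nk := by
    rw [Finset.disjoint_left]
    intro x hx hx'
    obtain ⟨y, hy, rfl⟩ := Finset.mem_image.1 hx
    have hy := (Finset.mem_erase.1 hy).2
    have := h0 y hy
    have := hmin _ hx' y hy (by omega)
    omega
  have hsub : (N0.erase j).image (fun x => x - 1) ∪ Nk ⊆ Finset.Icc 0 i ∪ Finset.Ico j k := by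
    intro x hx
    rw [Finset.mem_union, Finset.mem_Icc, Finset.mem_Ico]
    rcases Finset.mem_union.1 hx with hx | hx
    · obtain ⟨y, hy, rfl⟩ := Finset.mem_image.1 hx
      obtain ⟨hyj, hy⟩ := Finset.mem_erase.1 hy
      have := h0 y hy
      have := hmin i hi y hy
      omega
    · have := hk x hx
      have := hmin x hx j hj
      omega
  have h1 := Finset.card_le_card hsub
  rw [Finset.card_union_of_disjoint hdisj, himg] at h1
  have h2 := Finset.card_union_le (Finset.Icc 0 i) (Finset.Ico j k)
  simp at h2
  have := Finset.card_pos.2 ⟨j, hj⟩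
  omega

lemma exists_longest (hne : Nonempty V) : ∃ (f : ℕ → V) (k : ℕ), PF G f k ∧
    ∀ S u v, HP G S u v → S.card ≤ k + 1 := by
  classical
  obtain ⟨w⟩ := hne
  obtain ⟨S, hS, hmax⟩ := Finset.exists_max_image
    (Finset.univ.filter fun S : Finset V => ∃ u v, HP G S u v) Finset.card
    ⟨{w}, by simpa using ⟨w, w, HP.single w⟩⟩
  obtain ⟨u, v, p, hp, h⟩ := (Finset.mem_filter.1 hS).2
  refine ⟨p.getVert, p.length, ⟨?_, ?_⟩, ?_⟩
  · intro i hi j hj e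
    exact hp.getVert_injOn (by simpa using hi) (by simpa using hj) e
  · intro i hi
    exact p.adj_getVert_succ hi
  · intro T a b hT
    rw [← HP.card hp h]
    exact hmax T (Finset.mem_filter.2 ⟨Finset.mem_univ _, a, b, hT⟩)

lemma nbr_card [DecidableRel G.Adj] {f : ℕ → V} {k : ℕ} (v : V)
    (h : ∀ x, G.Adj v x → x ∈ seg f 0 k) :
    G.degree v ≤ ((Finset.range (k + 1)).filter fun i => G.Adj v (f i)).card := by
  rw [← G.card_neighborFinset_eq_degree]
  refine le_trans (Finset.card_le_card ?_) (Finset.card_image_le (f := f))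
  intro x hx
  have hx : G.Adj v x := by simpa using hx
  obtain ⟨i, _, _, rfl⟩ := mem_seg.1 (h x hx)
  exact Finset.mem_image.2 ⟨i, by simp [hx]; omega, rfl⟩

lemma main [DecidableRel G.Adj]
    (hcard : 3 ≤ Fintype.card V)
    (h2conn : ∀ v : V, ((⊤ : G.Subgraph).deleteVerts {v}).coe.Connected)
    (δ : ℕ) (hδ : 2 ≤ δ) (hdeg : ∀ v : V, δ ≤ G.degree v) :
    ∃ S, Cyc G S ∧ min (Fintype.card V) (2 * δ) ≤ S.card := by
  obtain ⟨f, k, h, hmax⟩ := exists_longest (G := G) (Fintype.card_pos_iff.1 (by omega))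
  have hP := h.hp (Nat.zero_le k) le_rfl
  have hPc := h.seg_card (i := 0) (le_refl k)
  have n0 : ∀ x, G.Adj (f 0) x → x ∈ seg f 0 k := by
    intro x hx
    by_contra hn
    have := hmax _ _ _ (hP.cons hx.symm hn)
    rw [Finset.card_insert_of_notMem hn] at this
    omega
  have nk : ∀ x, G.Adj (f k) x → x ∈ seg f 0 k := by
    intro x hx
    by_contra hn
    have := hmax _ _ _ (hP.snoc hx hn)
    rw [Finset.card_insert_of_notMem hn] at this
    omega
  have c0 := (hdeg _).trans (nbr_card _ n0)
  have ck := (hdeg _).trans (nbr_card _ nk)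
  have m0 : ∀ i, i ∈ ((Finset.range (k + 1)).filter fun i => G.Adj (f 0) (f i)) ↔
      i ≤ k ∧ G.Adj (f 0) (f i) := by intro i; simp [Nat.lt_succ_iff]
  have mk : ∀ i, i ∈ ((Finset.range (k + 1)).filter fun i => G.Adj (f k) (f i)) ↔
      i ≤ k ∧ G.Adj (f k) (f i) := by intro i; simp [Nat.lt_succ_iff]
  generalize ((Finset.range (k + 1)).filter fun i => G.Adj (f 0) (f i)) = N0 at *
  generalize ((Finset.range (k + 1)).filter fun i => G.Adj (f k) (f i)) = Nk at *
  have b0 : ∀ x ∈ N0, 0 < x ∧ x ≤ k := by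
    intro x hx
    rw [m0] at hx
    refine ⟨Nat.pos_of_ne_zero ?_, hx.1⟩
    rintro rfl; exact hx.2.ne rfl
  have bk : ∀ x ∈ Nk, x < k := by
    intro x hx
    rw [mk] at hx
    refine lt_of_le_of_ne hx.1 ?_
    rintro rfl; exact hx.2.ne rfl
  have hkδ : δ ≤ k := by
    have : Nk ⊆ Finset.range k := fun x hx => Finset.mem_range.2 (bk x hx)
    have := Finset.card_le_card this
    simp at this; omega
  by_cases hcross : ∃ d, ∃ i ∈ Nk, ∃ j ∈ N0, i < j ∧ j - i = d
  · classical
    obtain ⟨i, hi, j, hj, hij, e⟩ := Nat.find_spec hcross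
    have hmin : ∀ i' ∈ Nk, ∀ j' ∈ N0, i' < j' → j - i ≤ j' - i' := by
      intro i' hi' j' hj' hlt
      rw [e]
      exact Nat.find_min' hcross ⟨i', hi', j', hj', hlt, rfl⟩
    have hjk := (b0 j hj).2
    have hdis := seg_disj h (a := 0) hij (le_refl k)
    have hpath := (h.hp (Nat.zero_le i) (by omega)).symm.join (h.hp hjk le_rfl)
      ((m0 j).1 hj).2 hdis
    have hsz : (seg f 0 i ∪ seg f j k).card = (i + 1) + (k + 1 - j) := by
      rw [Finset.card_union_of_disjoint hdis, h.seg_card (by omega), h.seg_card le_rfl]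
      omega
    by_cases hgap : 2 ≤ j - i
    · have hcnt := count_cross b0 bk hi hj hij hmin hgap c0 ck
      refine ⟨_, ⟨_, _, hpath, ((mk i).1 hi).2, ?_⟩, ?_⟩ <;> rw [hsz]
      · omega
      · exact (min_le_right _ _).trans hcnt
    · -- a cycle on all vertices of the path; it must be Hamiltonian
      have hcyc : Cyc G (seg f 0 i ∪ seg f j k) := ⟨_, _, hpath, ((mk i).1 hi).2, by omega⟩
      refine ⟨_, hcyc, (min_le_left _ _).trans ?_⟩
      have hS : (seg f 0 i ∪ seg f j k).card = k + 1 := by omega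
      generalize (seg f 0 i ∪ seg f j k) = S at *
      by_contra hlt
      obtain ⟨y, hy⟩ : ∃ y, y ∉ S := by
        by_contra hall
        push Not at hall
        have : S = Finset.univ := Finset.eq_univ_iff_forall.2 hall
        rw [this, Finset.card_univ] at hlt
        omega
      -- an edge leaving S
      obtain ⟨x, hx, z, hz, hxz⟩ : ∃ x ∈ S, ∃ z, z ∉ S ∧ G.Adj x z := by
        obtain ⟨x, hx, z, hz, hne⟩ : ∃ x ∈ S, ∃ z ∈ S, x ≠ z ∧ True := by
          obtain ⟨x, hx, z, hz, hne⟩ := Finset.one_lt_card.1 (show 1 < S.card by omega)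
          exact ⟨x, hx, z, hz, hne, trivial⟩
        obtain ⟨T, ⟨p, -, -⟩, -⟩ := exists_path h2conn (z := z) (c := x) (d := y) hne.1
          (by rintro rfl; exact hy hz)
        obtain ⟨d, -, h1, h2⟩ := p.exists_boundary_dart (S : Set V) hx hy
        exact ⟨d.fst, h1, d.snd, h2, d.adj⟩
      obtain ⟨w, hw⟩ := hcyc.rot hx
      have := hmax _ _ _ (hw.snoc hxz hz)
      rw [Finset.card_insert_of_notMem hz] at this
      omega
  · have hnc : ∀ i ∈ Nk, ∀ j ∈ N0, j ≤ i := by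
      intro i hi j hj
      by_contra hlt
      exact hcross ⟨_, i, hi, j, hj, by omega, rfl⟩
    have ne0 : N0.Nonempty := Finset.card_pos.1 (by omega)
    have nek : Nk.Nonempty := Finset.card_pos.1 (by omega)
    have hs := N0.max'_mem ne0
    have ht := Nk.min'_mem nek
    have hsm : ∀ x ∈ N0, x ≤ N0.max' ne0 := fun x hx => N0.le_max' x hx
    have htm : ∀ x ∈ Nk, Nk.min' nek ≤ x := fun x hx => Nk.min'_le x hx
    generalize N0.max' ne0 = s at *
    generalize Nk.min' nek = t at *
    have hst := hnc t ht s hs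
    have htk := bk t ht
    obtain ⟨S, hS, hS0, hSk, hSn0, hSnk⟩ := noncross h2conn h (b0 s hs).1 hst htk
      ((m0 s).1 hs).2 ((mk t).1 ht).2
    refine ⟨S, hS, (min_le_right _ _).trans ?_⟩
    have hsub : (insert 0 N0 ∪ insert k Nk).image f ⊆ S := by
      intro x hx
      obtain ⟨i, hi, rfl⟩ := Finset.mem_image.1 hx
      simp only [Finset.mem_union, Finset.mem_insert] at hi
      rcases hi with (rfl | hi) | (rfl | hi)
      · exact hS0
      · exact hSn0 i (hsm i hi) ((m0 i).1 hi).2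
      · exact hSk
      · exact hSnk i (htm i hi) ((mk i).1 hi).1 ((mk i).1 hi).2
    have hle := Finset.card_le_card hsub
    have hbd : ∀ i ∈ insert 0 N0 ∪ insert k Nk, i ≤ k := by
      intro i hi
      simp only [Finset.mem_union, Finset.mem_insert] at hi
      rcases hi with (rfl | hi) | (rfl | hi)
      · omega
      · exact (b0 i hi).2
      · omega
      · exact (bk i hi).le
    rw [Finset.card_image_of_injOn (fun a ha b hb e => h.inj a (hbd a ha) b (hbd b hb) e)] at hle
    have hint : insert 0 N0 ∩ insert k Nk ⊆ {s} := by
      intro i hi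
      simp only [Finset.mem_inter, Finset.mem_insert] at hi
      rw [Finset.mem_singleton]
      have := (b0 s hs).1
      rcases hi with ⟨rfl | h1, rfl | h2⟩
      · omega
      · have := hnc _ h2 s hs; omega
      · have := hsm _ h1; omega
      · have := hsm _ h1
        have := htm _ h2
        omega
    have hint' := Finset.card_le_card hint
    have hui := Finset.card_union_add_card_inter (insert 0 N0) (insert k Nk)
    rw [Finset.card_insert_of_notMem (fun h => absurd (b0 _ h).1 (lt_irrefl _)),
      Finset.card_insert_of_notMem (fun h => absurd (bk _ h) (lt_irrefl _))] at hui
    simp only [Finset.card_singleton] at hint'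
    omega

end DiracAux

/-- Dirac's theorem on long cycles: every 2-connected graph `G` on `n` vertices with
minimum degree at least `δ ≥ 2` contains a cycle of length at least `min {n, 2δ}`. -/
theorem dirac_long_cycle {V : Type*} [Fintype V] [DecidableEq V] (G : SimpleGraph V)
    [DecidableRel G.Adj]
    (hcard : 3 ≤ Fintype.card V)
    (h2conn : ∀ v : V, ((⊤ : G.Subgraph).deleteVerts {v}).coe.Connected)
    (δ : ℕ) (hδ : 2 ≤ δ) (hdeg : ∀ v : V, δ ≤ G.degree v) :
    ∃ (v : V) (c : G.Walk v v), c.IsCycle ∧ min (Fintype.card V) (2 * δ) ≤ c.length := by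
  obtain ⟨S, hS, hle⟩ := DiracAux.main hcard h2conn δ hδ hdeg
  obtain ⟨v, c, hc, hl⟩ := hS.cycle
  exact ⟨v, c, hc, hle.trans hl⟩
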